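/- Let τ ∈ 𝒯. Give PSL(2,ℂ) the quotient topology from SL(2,ℂ) (topologized as a subspace of the 2×2 complex matrices), give X_τ the subspace topology, and give the set H_τ\PSL(2,ℂ) of right cosets (the quotient of PSL(2,ℂ) by the relation x ∼ y ⇔ xy⁻¹ ∈ H_τ) the quotient topology. Then the map F : H_τ\PSL(2,ℂ) → X_τ defined by F(H_τ g) = g⁻¹ f_τ g is a well-defined homeomorphism. -/

import Mathlib

/-!
`PSL(2,ℂ)` acts on itself by conjugation, and for this action `X_τ` is the orbit of `f_τ` and `H_τ`
its stabilizer.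

A `2 × 2` matrix that is not scalar has a cyclic vector, hence is conjugate to the companion matrix
of its characteristic polynomial; over `ℂ` the conjugating matrix can be rescaled to determinant
one. So nontrivial elements of `PSL(2,ℂ)` are conjugate as soon as they have lifts of equal trace.
An element of `PSL(2,ℂ)` centralizes the class of `A` exactly when its lifts commute or
anticommute with `A`, and `A B = -B A` forces `tr A = 0`: this is why `H_[0]` alone has an
antidiagonal part.

The orbit map is open by the Baire category theorem: `PSL(2,ℂ)` is σ-compact, and `X_τ` is locally
compact, being the intersection of the open set `{1}ᶜ` with a closed level set of `tr²`.
-/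

open Matrix

abbrev SL2C := Matrix.SpecialLinearGroup (Fin 2) ℂ

/-- `PSL(2,ℂ) = SL(2,ℂ)/{±I}` (the center of `SL(2,ℂ)` is `{±I}`). -/
abbrev PSL2C := Matrix.ProjectiveSpecialLinearGroup (Fin 2) ℂ

/-- The subspace topology on `SL(2,ℂ)` from the `2×2` complex matrices;
`PSL(2,ℂ)` then carries the quotient topology. -/
noncomputable instance : TopologicalSpace SL2C :=
  TopologicalSpace.induced (fun A => (A : Matrix (Fin 2) (Fin 2) ℂ)) inferInstance

/-- The projection `π : SL(2,ℂ) → PSL(2,ℂ)`. -/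
def prSL : SL2C →* PSL2C := QuotientGroup.mk' (Subgroup.center SL2C)

/-- `X_τ` for `τ = [t]`: the nontrivial elements of `PSL(2,ℂ)` admitting a lift of
trace `t` or `−t`. -/
def XtauP (t : ℂ) : Set PSL2C :=
  {f | f ≠ 1 ∧ ∃ A : SL2C, prSL A = f ∧
    (Matrix.trace (A : Matrix (Fin 2) (Fin 2) ℂ) = t ∨
     Matrix.trace (A : Matrix (Fin 2) (Fin 2) ℂ) = -t)}

/-- `H_[2]`: the image in `PSL(2,ℂ)` of the upper unitriangular matrices. -/
def HparP : Set PSL2C :=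
  {f | ∃ B : SL2C, prSL B = f ∧ ∃ v : ℂ, (B : Matrix (Fin 2) (Fin 2) ℂ) = !![1, v; 0, 1]}

/-- `H_τ` for `τ ∉ {[0],[2]}`: the image in `PSL(2,ℂ)` of the diagonal matrices. -/
def HdiagP : Set PSL2C :=
  {f | ∃ B : SL2C, prSL B = f ∧
    ∃ μ : ℂ, μ ≠ 0 ∧ (B : Matrix (Fin 2) (Fin 2) ℂ) = !![μ, 0; 0, μ⁻¹]}

/-- `H_[0]`: the image in `PSL(2,ℂ)` of the diagonal and antidiagonal matrices. -/
def HzeroP : Set PSL2C :=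
  HdiagP ∪ {f | ∃ B : SL2C, prSL B = f ∧
    ∃ μ : ℂ, μ ≠ 0 ∧ (B : Matrix (Fin 2) (Fin 2) ℂ) = !![0, μ; -μ⁻¹, 0]}

open Topology

section RightCosets

instance sigmaCompactSpace_quotientGroup {G : Type*} [Group G] [TopologicalSpace G]
    [SigmaCompactSpace G] (N : Subgroup G) : SigmaCompactSpace (G ⧸ N) where
  isSigmaCompact_univ := by
    rw [← (QuotientGroup.mk_surjective (s := N)).range_eq]
    exact isSigmaCompact_range QuotientGroup.continuous_mk

lemma exists_homeomorph_quotient_of_isQuotientMap {X Y : Type*} [TopologicalSpace X]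
    [TopologicalSpace Y] {f : X → Y} (hf : IsQuotientMap f) {s : Setoid X}
    (hs : s = Setoid.ker f) :
    ∃ F : Quotient s ≃ₜ Y, ∀ x, F (Quotient.mk s x) = f x := by
  subst hs
  exact ⟨IsQuotientMap.homeomorph (f := ⟨f, hf.continuous⟩) hf, fun _ => rfl⟩

lemma rightRel_stabilizer_eq_ker {G X : Type*} [Group G] [MulAction G X] (x : X) :
    QuotientGroup.rightRel (MulAction.stabilizer G x) = Setoid.ker fun g : G => g⁻¹ • x := by
  ext g h
  rw [QuotientGroup.rightRel_apply, MulAction.mem_stabilizer_iff, Setoid.ker_def, mul_smul,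
    smul_eq_iff_eq_inv_smul, eq_comm]

theorem exists_homeomorph_rightCosets_stabilizer {G X : Type*} [Group G] [TopologicalSpace G]
    [IsTopologicalGroup G] [SigmaCompactSpace G] [TopologicalSpace X] [T2Space X] [BaireSpace X]
    [MulAction G X] [ContinuousSMul G X] [MulAction.IsPretransitive G X] (x : X) :
    ∃ F : Quotient (QuotientGroup.rightRel (MulAction.stabilizer G x)) ≃ₜ X,
      ∀ g : G, F (Quotient.mk _ g) = g⁻¹ • x := by
  have hopen : IsOpenMap fun g : G => g⁻¹ • x :=
    (isOpenMap_smul_of_sigmaCompact x).comp (Homeomorph.inv G).isOpenMap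
  have hsurj : Function.Surjective fun g : G => g⁻¹ • x :=
    (MulAction.surjective_smul G x).comp inv_surjective
  exact exists_homeomorph_quotient_of_isQuotientMap
    (hopen.isQuotientMap (by fun_prop) hsurj) (rightRel_stabilizer_eq_ker x)

end RightCosets

section Conjugation

variable {G : Type*} [Group G]

/-- The action of a group by conjugation on one of its conjugacy classes, as an action of `G`
itself rather than of the type synonym `ConjAct G`. -/
instance conjugatesOfMulAction (x : G) : MulAction G (conjugatesOf x) where
  smul g y := ⟨g * y * g⁻¹, y.2.trans (isConj_iff.mpr ⟨g, rfl⟩)⟩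
  one_smul y := Subtype.ext (show 1 * (y : G) * 1⁻¹ = y by simp)
  mul_smul g h y := Subtype.ext
    (show g * h * (y : G) * (g * h)⁻¹ = g * (h * y * h⁻¹) * g⁻¹ by group)

lemma coe_smul_conjugatesOf {x : G} (g : G) (y : conjugatesOf x) :
    ((g • y : conjugatesOf x) : G) = g * y * g⁻¹ := rfl

instance (x : G) : MulAction.IsPretransitive G (conjugatesOf x) where
  exists_smul_eq y z :=
    let ⟨g, hg⟩ := isConj_iff.mp (y.2.symm.trans z.2)
    ⟨g, Subtype.ext hg⟩

lemma stabilizer_conjugatesOf_self (x : G) :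
    MulAction.stabilizer G (⟨x, mem_conjugatesOf_self⟩ : conjugatesOf x) =
      Subgroup.centralizer {x} := by
  ext g
  rw [MulAction.mem_stabilizer_iff, Subtype.ext_iff, coe_smul_conjugatesOf,
    Subgroup.mem_centralizer_singleton_iff, mul_inv_eq_iff_eq_mul]

variable [TopologicalSpace G] [IsTopologicalGroup G]

instance (x : G) : ContinuousSMul G (conjugatesOf x) where
  continuous_smul := Continuous.subtype_mk
    (show Continuous fun p : G × conjugatesOf x => p.1 * (p.2 : G) * p.1⁻¹ by fun_prop) _

theorem exists_homeomorph_rightCosets_centralizer [SigmaCompactSpace G] [T2Space G] (x : G)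
    [BaireSpace (conjugatesOf x)] :
    ∃ F : Quotient (QuotientGroup.rightRel (Subgroup.centralizer {x})) ≃ₜ conjugatesOf x,
      ∀ g : G, (F (Quotient.mk _ g) : G) = g⁻¹ * x * g := by
  rw [← stabilizer_conjugatesOf_self]
  obtain ⟨F, hF⟩ := exists_homeomorph_rightCosets_stabilizer (G := G)
    (⟨x, mem_conjugatesOf_self⟩ : conjugatesOf x)
  exact ⟨F, fun g => by rw [hF, coe_smul_conjugatesOf, inv_inv]⟩

instance isClosed_center [T2Space G] : IsClosed (Subgroup.center G : Set G) := by
  rw [← Subgroup.centralizer_univ]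
  exact Set.isClosed_centralizer _

end Conjugation

lemma ne_inv_of_add_inv_ne {K : Type*} [Field K] {a : K} (ha : a ≠ 0) (h2 : a + a⁻¹ ≠ 2)
    (hneg : a + a⁻¹ ≠ -2) : a ≠ a⁻¹ := by
  intro h
  rcases mul_self_eq_one_iff.mp ((mul_eq_one_iff_eq_inv₀ ha).mpr h) with rfl | rfl
  · exact h2 (by norm_num)
  · exact hneg (by norm_num)

section Matrices

variable {n K R : Type*} [Field K] [CommRing R]

lemma exists_det_row_vecMul_ne_zero {M : Matrix (Fin 2) (Fin 2) R}
    (hM : M ∉ Set.range (scalar (Fin 2))) : ∃ v, (Matrix.of ![v, v ᵥ* M]).det ≠ 0 := by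
  by_contra! h
  have h01 : M 0 1 = 0 := by simpa [det_fin_two, vecMul, dotProduct] using h ![1, 0]
  have h10 : M 1 0 = 0 := by simpa [det_fin_two, vecMul, dotProduct] using h ![0, 1]
  have hdiag : M 1 1 - M 0 0 = 0 := by
    simpa [det_fin_two, vecMul, dotProduct, h01, h10] using h ![1, 1]
  refine hM ⟨M 0 0, ?_⟩
  ext i j
  fin_cases i <;> fin_cases j <;> simp [h01, h10, sub_eq_zero.mp hdiag]

/-- The second row is the Cayley–Hamilton identity. -/
lemma row_vecMul_mul (M : Matrix (Fin 2) (Fin 2) R) (v : Fin 2 → R) :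
    Matrix.of ![v, v ᵥ* M] * M = !![0, 1; -M.det, M.trace] * Matrix.of ![v, v ᵥ* M] := by
  ext i j
  fin_cases i <;> fin_cases j <;>
    simp [mul_apply, vecMul, dotProduct, det_fin_two, trace_fin_two] <;> ring

lemma isConj_companion {M : Matrix (Fin 2) (Fin 2) K} (hM : M ∉ Set.range (scalar (Fin 2))) :
    IsConj M !![0, 1; -M.det, M.trace] := by
  obtain ⟨v, hv⟩ := exists_det_row_vecMul_ne_zero hM
  exact ⟨GeneralLinearGroup.mkOfDetNeZero _ hv, row_vecMul_mul M v⟩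

theorem isConj_of_trace_eq_of_det_eq {M N : Matrix (Fin 2) (Fin 2) K}
    (hM : M ∉ Set.range (scalar (Fin 2))) (hN : N ∉ Set.range (scalar (Fin 2)))
    (htrace : M.trace = N.trace) (hdet : M.det = N.det) : IsConj M N := by
  have hMN := isConj_companion hM
  rw [htrace, hdet] at hMN
  exact hMN.trans (isConj_companion hN).symm

lemma exists_eq_unipotent_iff {M : Matrix (Fin 2) (Fin 2) R} :
    (∃ v, M = !![1, v; 0, 1]) ↔ M 1 0 = 0 ∧ M 0 0 = 1 ∧ M 1 1 = 1 := by
  refine ⟨?_, fun ⟨h10, h00, h11⟩ => ⟨M 0 1, ?_⟩⟩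
  · rintro ⟨v, rfl⟩
    exact ⟨rfl, rfl, rfl⟩
  · exact M.eta_fin_two.trans (by rw [h10, h00, h11])

lemma exists_eq_diagonal_iff {M : Matrix (Fin 2) (Fin 2) K} (hM : M.det = 1) :
    (∃ μ, μ ≠ 0 ∧ M = !![μ, 0; 0, μ⁻¹]) ↔ M 0 1 = 0 ∧ M 1 0 = 0 := by
  refine ⟨?_, fun ⟨h01, h10⟩ => ?_⟩
  · rintro ⟨μ, -, rfl⟩
    exact ⟨rfl, rfl⟩
  · have hmul : M 0 0 * M 1 1 = 1 := by rwa [det_fin_two, h01, zero_mul, sub_zero] at hM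
    refine ⟨M 0 0, left_ne_zero_of_mul_eq_one hmul, M.eta_fin_two.trans ?_⟩
    rw [h01, h10, eq_inv_of_mul_eq_one_right hmul]

lemma exists_eq_antidiagonal_iff {M : Matrix (Fin 2) (Fin 2) K} (hM : M.det = 1) :
    (∃ μ, μ ≠ 0 ∧ M = !![0, μ; -μ⁻¹, 0]) ↔ M 0 0 = 0 ∧ M 1 1 = 0 := by
  refine ⟨?_, fun ⟨h00, h11⟩ => ?_⟩
  · rintro ⟨μ, -, rfl⟩
    exact ⟨rfl, rfl⟩
  · have hmul : M 0 1 * -M 1 0 = 1 := by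
      rwa [det_fin_two, h00, zero_mul, zero_sub, ← mul_neg] at hM
    refine ⟨M 0 1, left_ne_zero_of_mul_eq_one hmul, M.eta_fin_two.trans ?_⟩
    rw [h00, h11, ← eq_inv_of_mul_eq_one_right hmul, neg_neg]

variable [Fintype n] [DecidableEq n]

lemma exists_det_smul_eq_one [Nonempty n] [IsAlgClosed K] {P : Matrix n n K} (hP : P.det ≠ 0) :
    ∃ s : K, (s • P).det = 1 := by
  obtain ⟨s, hs⟩ := IsAlgClosed.exists_pow_nat_eq P.det⁻¹ (Fintype.card_pos (α := n))
  exact ⟨s, by rw [det_smul, hs, inv_mul_cancel₀ hP]⟩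

theorem isConj_of_isConj_coe [IsAlgClosed K] {A B : Matrix.SpecialLinearGroup n K}
    (h : IsConj (A : Matrix n n K) (B : Matrix n n K)) : IsConj A B := by
  cases isEmpty_or_nonempty n
  · rw [Subsingleton.elim A B]
  obtain ⟨P, hP⟩ := h
  obtain ⟨s, hs⟩ := exists_det_smul_eq_one ((isUnit_iff_isUnit_det _).mp P.isUnit).ne_zero
  let Q : Matrix.SpecialLinearGroup n K := ⟨s • P, hs⟩
  have hQ : (Q : Matrix n n K) * A = B * Q :=
    show s • (P : Matrix n n K) * A = B * s • (P : Matrix n n K) by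
      rw [smul_mul_assoc, hP.eq, mul_smul_comm]
  exact isConj_iff.mpr ⟨Q, mul_inv_eq_iff_eq_mul.mpr (Subtype.ext hQ)⟩

lemma mem_center_of_coe_mem_range_scalar {A : Matrix.SpecialLinearGroup n R}
    (hA : (A : Matrix n n R) ∈ Set.range (scalar n)) :
    A ∈ Subgroup.center (Matrix.SpecialLinearGroup n R) := by
  obtain ⟨r, hr⟩ := hA
  refine Matrix.SpecialLinearGroup.mem_center_iff.mpr ⟨r, ?_, hr⟩
  simpa [← hr] using A.det_coe

theorem isConj_of_trace_eq [IsAlgClosed K] {A B : Matrix.SpecialLinearGroup (Fin 2) K}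
    (hA : A ∉ Subgroup.center _) (hB : B ∉ Subgroup.center _)
    (h : (A : Matrix (Fin 2) (Fin 2) K).trace = (B : Matrix (Fin 2) (Fin 2) K).trace) :
    IsConj A B :=
  isConj_of_isConj_coe <| isConj_of_trace_eq_of_det_eq (mt mem_center_of_coe_mem_range_scalar hA)
    (mt mem_center_of_coe_mem_range_scalar hB) h (A.det_coe.trans B.det_coe.symm)

lemma trace_eq_of_isConj {A B : Matrix.SpecialLinearGroup n R} (h : IsConj A B) :
    (A : Matrix n n R).trace = (B : Matrix n n R).trace := by
  obtain ⟨P, rfl⟩ := isConj_iff.mp h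
  rw [Matrix.SpecialLinearGroup.coe_mul, trace_mul_comm, ← Matrix.SpecialLinearGroup.coe_mul,
    inv_mul_cancel_left]

lemma mem_center_iff_eq_one_or_eq_neg_one [NoZeroDivisors R]
    {A : Matrix.SpecialLinearGroup (Fin 2) R} :
    A ∈ Subgroup.center (Matrix.SpecialLinearGroup (Fin 2) R) ↔ A = 1 ∨ A = -1 := by
  refine ⟨fun hA => ?_, ?_⟩
  · obtain ⟨r, hr, hrA⟩ := Matrix.SpecialLinearGroup.mem_center_iff.mp hA
    rcases sq_eq_one_iff.mp hr with rfl | rfl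
    · exact Or.inl (Subtype.ext (hrA.symm.trans (map_one _)))
    · exact Or.inr (Subtype.ext (hrA.symm.trans ((map_neg _ _).trans (congrArg _ (map_one _)))))
  · rintro (rfl | rfl)
    · exact one_mem _
    · exact Subgroup.mem_center_iff.mpr fun B => by rw [mul_neg_one, neg_one_mul]

lemma trace_eq_zero_of_mul_eq_neg_mul [NoZeroDivisors R] [NeZero (2 : R)]
    [Fact (Even (Fintype.card n))] {A B : Matrix.SpecialLinearGroup n R} (h : A * B = -(B * A)) :
    (A : Matrix n n R).trace = 0 := by
  have hconj : IsConj (-A) A :=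
    isConj_iff.mpr ⟨B, mul_inv_eq_iff_eq_mul.mpr ((mul_neg B A).trans h.symm)⟩
  have htrace : -(A : Matrix n n R).trace = (A : Matrix n n R).trace := by
    rw [← trace_neg, ← Matrix.SpecialLinearGroup.coe_neg, trace_eq_of_isConj hconj]
  have htwo : (2 : R) * (A : Matrix n n R).trace = 0 := by linear_combination -htrace
  exact (mul_eq_zero.mp htwo).resolve_left two_ne_zero

lemma mul_eq_mul_iff_coe {A B : Matrix.SpecialLinearGroup n R} :
    A * B = B * A ↔ (A : Matrix n n R) * B = B * A := Subtype.ext_iff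

lemma mul_eq_neg_mul_iff_coe [Fact (Even (Fintype.card n))]
    {A B : Matrix.SpecialLinearGroup n R} :
    A * B = -(B * A) ↔ (A : Matrix n n R) * B = -(B * A) := Subtype.ext_iff

lemma unipotent_mul_eq_mul_unipotent_iff {M : Matrix (Fin 2) (Fin 2) R} :
    !![1, 1; 0, 1] * M = M * !![1, 1; 0, 1] ↔ M 1 0 = 0 ∧ M 0 0 = M 1 1 := by
  rw [← Matrix.ext_iff]
  simp only [Fin.forall_fin_two, mul_apply, Fin.sum_univ_two, of_apply, cons_val', cons_val_zero,
    cons_val_one, cons_val_fin_one]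
  grind

lemma diagonal_mul_eq_mul_diagonal_iff [NoZeroDivisors R] {p q : R} (hpq : p ≠ q)
    {M : Matrix (Fin 2) (Fin 2) R} :
    !![p, 0; 0, q] * M = M * !![p, 0; 0, q] ↔ M 0 1 = 0 ∧ M 1 0 = 0 := by
  rw [← Matrix.ext_iff]
  simp [Fin.forall_fin_two, mul_apply, mul_comm _ p, mul_comm _ q, hpq, hpq.symm]

lemma diagonal_mul_eq_neg_mul_diagonal_iff [NoZeroDivisors R] [NeZero (2 : R)] {p : R}
    (hp : p ≠ 0) {M : Matrix (Fin 2) (Fin 2) R} :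
    !![p, 0; 0, -p] * M = -(M * !![p, 0; 0, -p]) ↔ M 0 0 = 0 ∧ M 1 1 = 0 := by
  have hdouble (x : R) : p * x = -(p * x) ↔ x = 0 := by
    rw [eq_neg_iff_add_eq_zero, ← two_mul]
    simp [hp, two_ne_zero]
  rw [← Matrix.ext_iff]
  simp [Fin.forall_fin_two, mul_apply, hdouble, mul_comm _ p, neg_eq_iff_eq_neg]

end Matrices

namespace PSL2C

variable {A B : SL2C} {t : ℂ}

lemma prSL_eq_one_iff : prSL A = 1 ↔ A ∈ Subgroup.center SL2C := QuotientGroup.eq_one_iff A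

lemma prSL_ne_one_of_apply_ne (h : A 0 1 ≠ 0 ∨ A 0 0 ≠ A 1 1) : prSL A ≠ 1 := by
  intro hA
  rcases mem_center_iff_eq_one_or_eq_neg_one.mp (prSL_eq_one_iff.mp hA) with rfl | rfl <;>
    simp at h

lemma prSL_eq_prSL_iff : prSL A = prSL B ↔ A = B ∨ A = -B := by
  rw [eq_comm, ← inv_mul_eq_one, ← map_inv, ← map_mul, prSL_eq_one_iff,
    mem_center_iff_eq_one_or_eq_neg_one, inv_mul_eq_one, inv_mul_eq_iff_eq_mul, mul_neg_one,
    eq_comm]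

lemma prSL_surjective : Function.Surjective prSL := QuotientGroup.mk'_surjective _

lemma exists_prSL_eq_iff (p : SL2C → Prop) :
    (∃ B, prSL B = prSL A ∧ p B) ↔ p A ∨ p (-A) := by
  simp only [prSL_eq_prSL_iff, or_and_right, exists_or, exists_eq_left]

/-- The function `tr²` on `PSL(2,ℂ)`; unlike the trace, it does not depend on the lift. -/
def traceSq : PSL2C → ℂ :=
  Quotient.lift (fun A : SL2C => (A : Matrix (Fin 2) (Fin 2) ℂ).trace ^ 2) fun A B hAB => by
    rcases prSL_eq_prSL_iff.mp (Quotient.sound hAB) with rfl | rfl <;> simp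

lemma traceSq_prSL : traceSq (prSL A) = (A : Matrix (Fin 2) (Fin 2) ℂ).trace ^ 2 := rfl

lemma mem_XtauP_iff {f : PSL2C} :
    f ∈ XtauP t ↔ f ≠ 1 ∧ ∃ B, prSL B = f ∧ (B : Matrix (Fin 2) (Fin 2) ℂ).trace = t := by
  refine and_congr_right fun _ => ⟨?_, fun ⟨B, hBf, hB⟩ => ⟨B, hBf, Or.inl hB⟩⟩
  rintro ⟨B, hBf, hB | hB⟩
  · exact ⟨B, hBf, hB⟩
  · exact ⟨-B, (prSL_eq_prSL_iff.mpr (Or.inr rfl)).trans hBf, by simp [hB]⟩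

lemma XtauP_eq : XtauP t = {1}ᶜ ∩ traceSq ⁻¹' {t ^ 2} := by
  ext f
  obtain ⟨A, rfl⟩ := prSL_surjective f
  rw [mem_XtauP_iff, exists_prSL_eq_iff]
  simp [traceSq_prSL, sq_eq_sq_iff_eq_or_eq_neg, neg_eq_iff_eq_neg]

section Topology

instance : IsTopologicalGroup SL2C := Matrix.SpecialLinearGroup.topologicalGroup

lemma isClosedEmbedding_coe_SL2C :
    IsClosedEmbedding fun A : SL2C => (A : Matrix (Fin 2) (Fin 2) ℂ) :=
  Matrix.SpecialLinearGroup.isClosedEmbedding_val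

instance : T2Space SL2C := isClosedEmbedding_coe_SL2C.isEmbedding.t2Space

instance : LocallyCompactSpace SL2C :=
  haveI : LocallyCompactSpace (Matrix (Fin 2) (Fin 2) ℂ) :=
    inferInstanceAs (LocallyCompactSpace (Fin 2 → Fin 2 → ℂ))
  isClosedEmbedding_coe_SL2C.locallyCompactSpace

instance : SigmaCompactSpace SL2C :=
  haveI : SigmaCompactSpace (Matrix (Fin 2) (Fin 2) ℂ) :=
    inferInstanceAs (SigmaCompactSpace (Fin 2 → Fin 2 → ℂ))
  isClosedEmbedding_coe_SL2C.sigmaCompactSpace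

lemma continuous_traceSq : Continuous traceSq :=
  (isClosedEmbedding_coe_SL2C.continuous.matrix_trace.pow 2).quotient_lift _

lemma isLocallyClosed_XtauP (t : ℂ) : IsLocallyClosed (XtauP t) := by
  rw [XtauP_eq]
  exact isOpen_compl_singleton.isLocallyClosed.inter
    (isClosed_singleton.preimage continuous_traceSq).isLocallyClosed

instance (t : ℂ) : BaireSpace (XtauP t) :=
  haveI := (isLocallyClosed_XtauP t).locallyCompactSpace
  inferInstance

end Topology

theorem conjugatesOf_prSL (hA : prSL A ≠ 1) (ht : (A : Matrix (Fin 2) (Fin 2) ℂ).trace = t) :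
    conjugatesOf (prSL A) = XtauP t := by
  ext f
  constructor
  · intro hf
    obtain ⟨g, rfl⟩ := isConj_iff.mp hf
    obtain ⟨P, rfl⟩ := prSL_surjective g
    have hP : IsConj A (P * A * P⁻¹) := isConj_iff.mpr ⟨P, rfl⟩
    exact ⟨fun h => hA (by simpa [mul_inv_eq_one] using h), P * A * P⁻¹, by simp,
      Or.inl ((trace_eq_of_isConj hP).symm.trans ht)⟩
  · rw [mem_XtauP_iff]
    rintro ⟨hf, B, rfl, hB⟩
    exact prSL.map_isConj (isConj_of_trace_eq (mt prSL_eq_one_iff.mpr hA)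
      (mt prSL_eq_one_iff.mpr hf) (ht.trans hB.symm))

theorem exists_homeomorph_XtauP (hA : prSL A ≠ 1)
    (ht : (A : Matrix (Fin 2) (Fin 2) ℂ).trace = t) {H : Subgroup PSL2C}
    (hH : (H : Set PSL2C) = Subgroup.centralizer {prSL A}) :
    ∃ F : Quotient (QuotientGroup.rightRel H) ≃ₜ XtauP t,
      ∀ g : PSL2C, (F (Quotient.mk (QuotientGroup.rightRel H) g) : PSL2C) = g⁻¹ * prSL A * g := by
  obtain rfl := SetLike.coe_injective hH
  have hX := conjugatesOf_prSL hA ht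
  have : BaireSpace (conjugatesOf (prSL A)) := by rw [hX]; infer_instance
  rw [← hX]
  exact exists_homeomorph_rightCosets_centralizer (prSL A)

section Centralizer

lemma prSL_mem_centralizer_iff :
    prSL B ∈ Subgroup.centralizer {prSL A} ↔ A * B = B * A ∨ A * B = -(B * A) := by
  rw [Subgroup.mem_centralizer_singleton_iff, ← map_mul, ← map_mul, eq_comm, prSL_eq_prSL_iff]

lemma prSL_mem_centralizer_iff_of_trace_ne_zero
    (hA : (A : Matrix (Fin 2) (Fin 2) ℂ).trace ≠ 0) :
    prSL B ∈ Subgroup.centralizer {prSL A} ↔ A * B = B * A := by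
  rw [prSL_mem_centralizer_iff, or_iff_left (mt trace_eq_zero_of_mul_eq_neg_mul hA)]

lemma prSL_mem_HparP_iff :
    prSL A ∈ HparP ↔ A 1 0 = 0 ∧ A 0 0 = A 1 1 := by
  have hpm : prSL A ∈ HparP ↔ (A 1 0 = 0 ∧ A 0 0 = 1 ∧ A 1 1 = 1) ∨
      (-A 1 0 = 0 ∧ -A 0 0 = 1 ∧ -A 1 1 = 1) :=
    (exists_prSL_eq_iff _).trans (or_congr exists_eq_unipotent_iff exists_eq_unipotent_iff)
  rw [hpm, neg_eq_zero, neg_eq_iff_eq_neg, neg_eq_iff_eq_neg, ← and_or_left, and_congr_right_iff]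
  intro h10
  have hdet : A 0 0 * A 1 1 = 1 := by
    simpa only [det_fin_two, h10, mul_zero, sub_zero] using A.det_coe
  refine ⟨?_, fun h => ?_⟩
  · rintro (⟨h00, h11⟩ | ⟨h00, h11⟩) <;> exact h00.trans h11.symm
  · rw [h, and_self, and_self]
    exact mul_self_eq_one_iff.mp (h ▸ hdet)

lemma prSL_mem_HdiagP_iff : prSL A ∈ HdiagP ↔ A 0 1 = 0 ∧ A 1 0 = 0 :=
  (exists_prSL_eq_iff _).trans <| (or_congr (exists_eq_diagonal_iff A.det_coe)
    (exists_eq_diagonal_iff (-A).det_coe)).trans (by simp)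

lemma prSL_mem_HzeroP_iff :
    prSL A ∈ HzeroP ↔ (A 0 1 = 0 ∧ A 1 0 = 0) ∨ (A 0 0 = 0 ∧ A 1 1 = 0) :=
  or_congr prSL_mem_HdiagP_iff <| (exists_prSL_eq_iff _).trans <|
    (or_congr (exists_eq_antidiagonal_iff A.det_coe)
      (exists_eq_antidiagonal_iff (-A).det_coe)).trans (by simp)

theorem HparP_eq_centralizer (hA : (A : Matrix (Fin 2) (Fin 2) ℂ) = !![1, 1; 0, 1]) :
    HparP = (Subgroup.centralizer {prSL A} : Set PSL2C) := by
  ext f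
  obtain ⟨B, rfl⟩ := prSL_surjective f
  have htrace : (A : Matrix (Fin 2) (Fin 2) ℂ).trace ≠ 0 := by simp [hA, trace_fin_two]
  rw [SetLike.mem_coe, prSL_mem_centralizer_iff_of_trace_ne_zero htrace, prSL_mem_HparP_iff,
    mul_eq_mul_iff_coe, hA, unipotent_mul_eq_mul_unipotent_iff]

theorem HdiagP_eq_centralizer {lam : ℂ} (hlam : lam ≠ lam⁻¹) (hzero : lam + lam⁻¹ ≠ 0)
    (hA : (A : Matrix (Fin 2) (Fin 2) ℂ) = !![lam, 0; 0, lam⁻¹]) :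
    HdiagP = (Subgroup.centralizer {prSL A} : Set PSL2C) := by
  ext f
  obtain ⟨B, rfl⟩ := prSL_surjective f
  have htrace : (A : Matrix (Fin 2) (Fin 2) ℂ).trace ≠ 0 := by simpa [hA, trace_fin_two]
  rw [SetLike.mem_coe, prSL_mem_centralizer_iff_of_trace_ne_zero htrace, prSL_mem_HdiagP_iff,
    mul_eq_mul_iff_coe, hA, diagonal_mul_eq_mul_diagonal_iff hlam]

theorem HzeroP_eq_centralizer {lam : ℂ} (hlam : lam ≠ 0) (hzero : lam + lam⁻¹ = 0)
    (hA : (A : Matrix (Fin 2) (Fin 2) ℂ) = !![lam, 0; 0, lam⁻¹]) :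
    HzeroP = (Subgroup.centralizer {prSL A} : Set PSL2C) := by
  ext f
  obtain ⟨B, rfl⟩ := prSL_surjective f
  rw [eq_neg_of_add_eq_zero_right hzero] at hA
  have hneg : lam ≠ -lam := self_ne_neg.mpr hlam
  rw [SetLike.mem_coe, prSL_mem_centralizer_iff, prSL_mem_HzeroP_iff,
    mul_eq_mul_iff_coe, mul_eq_neg_mul_iff_coe, hA, diagonal_mul_eq_mul_diagonal_iff hneg,
    diagonal_mul_eq_neg_mul_diagonal_iff hlam]

end Centralizer

end PSL2C

open PSL2C

/-- for every `τ ∈ 𝒯`, the map `F : H_τ\PSL(2,ℂ) → X_τ`,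
`F(H_τ g) = g⁻¹ f_τ g`, is a well-defined homeomorphism, where `H_τ\PSL(2,ℂ)`
carries the quotient topology and `X_τ` the subspace topology. -/
theorem homeomorph_coset_space_to_Xtau :
    (∀ A : SL2C, (A : Matrix (Fin 2) (Fin 2) ℂ) = !![1, 1; 0, 1] →
      ∀ H : Subgroup PSL2C, (H : Set PSL2C) = HparP →
      ∃ F : Quotient (QuotientGroup.rightRel H) ≃ₜ ↥(XtauP 2),
        ∀ g : PSL2C, ((F (Quotient.mk (QuotientGroup.rightRel H) g) : PSL2C)
          = g⁻¹ * prSL A * g)) ∧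
    (∀ t lam : ℂ, t ≠ 2 → t ≠ -2 → t ≠ 0 → lam ≠ 0 → lam + lam⁻¹ = t →
      ∀ A : SL2C, (A : Matrix (Fin 2) (Fin 2) ℂ) = !![lam, 0; 0, lam⁻¹] →
      ∀ H : Subgroup PSL2C, (H : Set PSL2C) = HdiagP →
      ∃ F : Quotient (QuotientGroup.rightRel H) ≃ₜ ↥(XtauP t),
        ∀ g : PSL2C, ((F (Quotient.mk (QuotientGroup.rightRel H) g) : PSL2C)
          = g⁻¹ * prSL A * g)) ∧
    (∀ lam : ℂ, lam ≠ 0 → lam + lam⁻¹ = 0 →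
      ∀ A : SL2C, (A : Matrix (Fin 2) (Fin 2) ℂ) = !![lam, 0; 0, lam⁻¹] →
      ∀ H : Subgroup PSL2C, (H : Set PSL2C) = HzeroP →
      ∃ F : Quotient (QuotientGroup.rightRel H) ≃ₜ ↥(XtauP 0),
        ∀ g : PSL2C, ((F (Quotient.mk (QuotientGroup.rightRel H) g) : PSL2C)
          = g⁻¹ * prSL A * g)) := by
  refine ⟨fun A hA H hH => ?_, fun t lam h2 hneg2 h0 hlam ht A hA H hH => ?_,
    fun lam hlam ht A hA H hH => ?_⟩
  · have hne : prSL A ≠ 1 := prSL_ne_one_of_apply_ne (Or.inl (by simp [hA]))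
    have htrace : (A : Matrix (Fin 2) (Fin 2) ℂ).trace = 2 := by
      rw [hA, trace_fin_two_of, one_add_one_eq_two]
    exact exists_homeomorph_XtauP hne htrace (hH.trans (HparP_eq_centralizer hA))
  · subst ht
    have hinv : lam ≠ lam⁻¹ := ne_inv_of_add_inv_ne hlam h2 hneg2
    have hne : prSL A ≠ 1 := prSL_ne_one_of_apply_ne (Or.inr (by simpa [hA] using hinv))
    have htrace : (A : Matrix (Fin 2) (Fin 2) ℂ).trace = lam + lam⁻¹ := by
      rw [hA, trace_fin_two_of]
    exact exists_homeomorph_XtauP hne htrace (hH.trans (HdiagP_eq_centralizer hinv h0 hA))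
  · have hinv : lam ≠ lam⁻¹ := ne_inv_of_add_inv_ne hlam (by simp [ht]) (by simp [ht])
    have hne : prSL A ≠ 1 := prSL_ne_one_of_apply_ne (Or.inr (by simpa [hA] using hinv))
    have htrace : (A : Matrix (Fin 2) (Fin 2) ℂ).trace = 0 := by
      rw [hA, trace_fin_two_of, ht]
    exact exists_homeomorph_XtauP hne htrace (hH.trans (HzeroP_eq_centralizer hlam ht hA))
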